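/- arXiv:math/0307401 — 5 statements merged into one kernel-verified Lean document; each statement's English description precedes it below -/
import Mathlib

section
/- Let w be a finite binary word and let α > 2 be a real number. Then w is α-power-free if and only if μ(w) is α-power-free, where μ is the Thue–Morse morphism. -/
/-- The Thue–Morse morphism `μ` on a single letter (`false` = 0, `true` = 1):
`μ(0) = 01`, `μ(1) = 10`. -/
def muLetter : Bool → List Bool
  | false => [false, true]
  | true  => [true, false]

/-- The Thue–Morse morphism `μ` on binary words. -/
def mu (w : List Bool) : List Bool := (w.map muLetter).flatten

/-- `z` is a `β`-power (for a rational `β`): `z = xⁿx'` with `x'` a prefix of `x`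
and `n + |x'|/|x| = β`. -/
def IsPower (β : ℚ) (z : List Bool) : Prop :=
  ∃ (n : ℕ) (x x' : List Bool), x ≠ [] ∧ x' <+: x ∧
    z = (List.replicate n x).flatten ++ x' ∧
    (n : ℚ) + (x'.length : ℚ) / (x.length : ℚ) = β

/-- The finite word `w` is `α`-power-free: no subword (contiguous factor) of `w`
is a `β`-power for any rational `β ≥ α`. -/
def PowerFree (α : ℝ) (w : List Bool) : Prop :=
  ∀ z : List Bool, z <:+: w → ∀ β : ℚ, α ≤ (β : ℝ) → ¬ IsPower β z

/-- The finite word `w` contains an `α`-power: some subword of `w` is a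
`β`-power for some rational `β ≥ α`. -/
def ContainsPower (α : ℝ) (w : List Bool) : Prop :=
  ∃ z : List Bool, z <:+: w ∧ ∃ β : ℚ, α ≤ (β : ℝ) ∧ IsPower β z

/-- `z` is a (finite) subword of the infinite word `w : ℕ → Bool`. -/
def InfSubword (z : List Bool) (w : ℕ → Bool) : Prop :=
  ∃ i : ℕ, z = (List.range z.length).map fun k => w (i + k)

/-- The infinite word `w` is `α`-power-free. -/
def PowerFreeInf (α : ℝ) (w : ℕ → Bool) : Prop :=
  ∀ z : List Bool, InfSubword z w → ∀ β : ℚ, α ≤ (β : ℝ) → ¬ IsPower β z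

/-- The infinite word `w` contains an `α`-power. -/
def ContainsPowerInf (α : ℝ) (w : ℕ → Bool) : Prop :=
  ∃ z : List Bool, InfSubword z w ∧ ∃ β : ℚ, α ≤ (β : ℝ) ∧ IsPower β z

/-- The length-`n` prefix of an infinite word. -/
def wordPrefix (w : ℕ → Bool) (n : ℕ) : List Bool := (List.range n).map w

/-- `h : Σ₂* → Σ₂*` is a morphism. -/
def IsMorphism (h : List Bool → List Bool) : Prop :=
  ∀ x y : List Bool, h (x ++ y) = h x ++ h y

/-- A morphism is non-erasing if it erases neither letter. -/
def NonErasing (h : List Bool → List Bool) : Prop :=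
  h [false] ≠ [] ∧ h [true] ≠ []

/-- The infinite word `u` is the image of the infinite word `w` under the morphism `h`
(obtained by concatenating the images of the letters of `w`): every `h(w[0..n))` is a
prefix of `u`, and these prefixes exhaust `u`. -/
def IsMorphImage (h : List Bool → List Bool) (w u : ℕ → Bool) : Prop :=
  (∀ n : ℕ, wordPrefix u (h (wordPrefix w n)).length = h (wordPrefix w n)) ∧
  ∀ m : ℕ, ∃ n : ℕ, m ≤ (h (wordPrefix w n)).length

/-- The complementation morphism `E` : `E(0) = 1`, `E(1) = 0`. -/
def eMorph (w : List Bool) : List Bool := w.map fun b => !b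

/-- The Thue–Morse word `μ^ω(0)` (`tm n` = parity of the binary digit sum of `n`). -/
def tm (n : ℕ) : Bool := (Nat.digits 2 n).sum % 2 == 1

/-- `μ³(0) = 01101001`. -/
def w01101001 : List Bool := [false, true, true, false, true, false, false, true]

/-- `μ³(1) = 10010110`. -/
def w10010110 : List Bool := [true, false, false, true, false, true, true, false]

/-- Index form of "contains a power of exponent at least `α`". -/
def HasPow (α : ℝ) (w : List Bool) : Prop :=
  ∃ i p L : ℕ, 0 < p ∧ i + L ≤ w.length ∧ α * p ≤ L ∧
    ∀ k, i ≤ k → k + p < i + L → w.getD k false = w.getD (k + p) false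

lemma rep_prefix (x x' : List Bool) (h : x' <+: x) (n : ℕ) :
    (List.replicate n x).flatten ++ x' <+: x ++ ((List.replicate n x).flatten ++ x') := by
  induction n with
  | zero => simpa using h.trans (List.prefix_append x x')
  | succ n ih =>
    simp only [List.replicate_succ, List.flatten_cons, List.append_assoc]
    exact (List.prefix_append_right_inj x).2 ih

lemma rep_of_prefix (x : List Bool) (hx : x ≠ []) : ∀ (m : ℕ) (z : List Bool), z.length = m →
    z <+: x ++ z → ∃ (n : ℕ) (x' : List Bool), x' <+: x ∧
      z = (List.replicate n x).flatten ++ x' := by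
  intro m
  induction m using Nat.strong_induction_on with
  | _ m ih =>
    intro z hz hp
    have hx0 : 0 < x.length := List.length_pos_iff.2 hx
    by_cases hl : z.length ≤ x.length
    · exact ⟨0, z, List.prefix_of_prefix_length_le hp (List.prefix_append x z) hl, by simp⟩
    · have h1 : x <+: z :=
        List.prefix_of_prefix_length_le (List.prefix_append x z) hp (by omega)
      obtain ⟨y, rfl⟩ := h1
      have h2 : y <+: x ++ y := (List.prefix_append_right_inj x).1 hp
      simp only [List.length_append] at hz
      obtain ⟨n, x', h3, h4⟩ := ih y.length (by omega) y rfl h2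
      refine ⟨n + 1, x', h3, ?_⟩
      conv_lhs => rw [h4]
      simp [List.replicate_succ]

lemma isPower_iff (β : ℚ) (z : List Bool) :
    IsPower β z ↔ ∃ x : List Bool, x ≠ [] ∧ z <+: x ++ z ∧
      (z.length : ℚ) / x.length = β := by
  have key : ∀ (n : ℕ) (x x' : List Bool), x ≠ [] →
      (((List.replicate n x).flatten ++ x').length : ℚ) / x.length
        = (n : ℚ) + (x'.length : ℚ) / (x.length : ℚ) := by
    intro n x x' hx
    have hx0 : (x.length : ℚ) ≠ 0 := by
      have := List.length_pos_iff.2 hx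
      positivity
    simp
    field_simp
  constructor
  · rintro ⟨n, x, x', hx, hp, rfl, hβ⟩
    exact ⟨x, hx, rep_prefix x x' hp n, by rw [key n x x' hx, hβ]⟩
  · rintro ⟨x, hx, hp, hβ⟩
    obtain ⟨n, x', h3, h4⟩ := rep_of_prefix x hx _ z rfl hp
    refine ⟨n, x, x', hx, h3, h4, ?_⟩
    rw [← key n x x' hx, ← h4, hβ]

lemma powerFree_iff (α : ℝ) (hα : 2 < α) (w : List Bool) :
    PowerFree α w ↔ ¬ HasPow α w := by
  constructor
  · rintro h ⟨i, p, L, hp, hL, ha, hk⟩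
    have hpR : (0 : ℝ) < p := by exact_mod_cast hp
    have hpL : p ≤ L := by
      have : (p : ℝ) ≤ L := by nlinarith
      exact_mod_cast this
    have hzl : ((w.drop i).take L).length = L := by simp; omega
    have hxl : (((w.drop i).take L).take p).length = p := by rw [List.length_take, hzl]; omega
    refine h ((w.drop i).take L)
      ((List.take_prefix _ _).isInfix.trans (List.drop_suffix _ _).isInfix)
      ((L : ℚ) / p) ?_ ((isPower_iff _ _).2 ⟨((w.drop i).take L).take p, ?_, ?_, ?_⟩)
    · push_cast
      rwa [le_div_iff₀ hpR]
    · intro h0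
      rw [h0] at hxl
      simp at hxl
      omega
    · rw [List.prefix_iff_getElem?]
      intro k hk'
      rw [hzl] at hk'
      rw [List.getElem?_append, hxl]
      split_ifs with hkp
      · rw [List.getElem?_eq_getElem (by omega)]
        simp
      · rw [List.getElem?_eq_getElem (by omega)]
        have := hk (i + (k - p)) (by omega) (by omega)
        rw [List.getD_eq_getElem _ _ (by omega), List.getD_eq_getElem _ _ (by omega)] at this
        simp only [List.getElem_take, List.getElem_drop, this]
        congr 2
        omega
    · rw [hzl, hxl]
  · intro h z hz β hβ hP
    apply h
    obtain ⟨x, hx, hp, hb⟩ := (isPower_iff _ _).1 hP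
    obtain ⟨s, t, rfl⟩ := hz
    have hx0 : 0 < x.length := List.length_pos_iff.2 hx
    have hxR : (0 : ℝ) < x.length := by exact_mod_cast hx0
    refine ⟨s.length, x.length, z.length, hx0, by simp, ?_, ?_⟩
    · rw [← hb] at hβ
      push_cast at hβ
      rwa [le_div_iff₀ hxR] at hβ
    · intro k hk1 hk2
      obtain ⟨j, rfl⟩ := Nat.exists_eq_add_of_le hk1
      rw [List.prefix_iff_getElem?] at hp
      have := hp (j + x.length) (by omega)
      rw [List.getElem?_append_right (by omega)] at this
      simp only [Nat.add_sub_cancel] at this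
      simp only [List.getD_eq_getElem?_getD, List.append_assoc]
      rw [List.getElem?_append_right (show s.length ≤ s.length + j by omega),
        List.getElem?_append_right (show s.length ≤ s.length + j + x.length by omega),
        show s.length + j - s.length = j by omega,
        show s.length + j + x.length - s.length = j + x.length by omega,
        List.getElem?_append_left (show j < z.length by omega),
        List.getElem?_append_left (show j + x.length < z.length by omega), this]
      rw [List.getElem?_eq_getElem (by omega)]

lemma mu_length (w : List Bool) : (mu w).length = 2 * w.length := by
  induction w with
  | nil => simp [mu]
  | cons a w ih =>
    simp only [mu, List.map_cons, List.flatten_cons, List.length_append, List.length_cons] at ih ⊢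
    rw [ih]
    cases a <;> simp [muLetter] <;> omega

lemma mu_get (w : List Bool) : ∀ j, j < w.length →
    (mu w).getD (2 * j) false = w.getD j false ∧
    (mu w).getD (2 * j + 1) false = !(w.getD j false) := by
  induction w with
  | nil => simp
  | cons a w ih =>
    intro j hj
    have e : ∃ c, mu (a :: w) = a :: (!a) :: c ∧ c = mu w := by
      cases a <;> simp [mu, muLetter]
    obtain ⟨c, e, hc⟩ := e
    rw [e, hc]
    cases j with
    | zero => simp
    | succ j =>
      have := ih j (by simpa using hj)
      simpa [Nat.mul_add] using this

lemma mu_get' (w : List Bool) (m : ℕ) (hm : m < 2 * w.length) :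
    (mu w).getD m false = xor (w.getD (m / 2) false) (decide (m % 2 = 1)) := by
  have := mu_get w (m / 2) (by omega)
  rcases Nat.mod_two_eq_zero_or_one m with h | h
  · rw [h, ← show 2 * (m / 2) = m by omega, this.1]
    simp
  · have e : m = 2 * (m / 2) + 1 := by omega
    rw [h]
    conv_lhs => rw [e, this.2]
    simp

theorem thue_morse_preserves_power_freeness (w : List Bool) (α : ℝ) (hα : 2 < α) :
    PowerFree α w ↔ PowerFree α (mu w) := by
  rw [powerFree_iff α hα, powerFree_iff α hα, not_iff_not]
  constructor
  · rintro ⟨i, p, L, hp, hL, ha, hk⟩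
    refine ⟨2 * i, 2 * p, 2 * L, by omega, by rw [mu_length]; omega, by push_cast; linarith, ?_⟩
    intro k h1 h2
    rw [mu_get' w k (by omega), mu_get' w _ (by omega), hk (k / 2) (by omega) (by omega)]
    congr 2
    · congr 1; omega
    · congr 1; omega
  · rintro ⟨i, p, L, hp, hL, ha, hk⟩
    rw [mu_length] at hL
    have hpR : (0 : ℝ) < p := by exact_mod_cast hp
    have hL2 : 2 * p < L := by
      have : (2 * p : ℝ) < L := by nlinarith
      exact_mod_cast this
    rcases Nat.even_or_odd' p with ⟨q, rfl | rfl⟩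
    · refine ⟨i / 2, q, (i + L - 1) / 2 - i / 2 + 1, by omega, by omega, ?_, ?_⟩
      · have : L ≤ 2 * ((i + L - 1) / 2 - i / 2 + 1) := by omega
        have : (L : ℝ) ≤ 2 * (((i + L - 1) / 2 - i / 2 + 1 : ℕ) : ℝ) := by exact_mod_cast this
        push_cast at ha this ⊢
        linarith
      · intro k h1 h2
        obtain ⟨m, hm1, hm2, rfl⟩ : ∃ m, i ≤ m ∧ m + 2 * q < i + L ∧ m / 2 = k := by
          by_cases h : i ≤ 2 * k
          · exact ⟨2 * k, h, by omega, by omega⟩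
          · exact ⟨2 * k + 1, by omega, by omega, by omega⟩
        have := hk m hm1 hm2
        rw [mu_get' w m (by omega), mu_get' w _ (by omega),
          show (m + 2 * q) / 2 = m / 2 + q by omega,
          show (m + 2 * q) % 2 = m % 2 by omega] at this
        simpa using this
    · exfalso
      have adjE : ∀ m, m % 2 = 0 → m + 1 < i + L →
          (mu w).getD (m + 1) false = !((mu w).getD m false) := by
        intro m hm hm'
        rw [mu_get' w m (by omega), mu_get' w _ (by omega), hm,
          show (m + 1) / 2 = m / 2 by omega, show (m + 1) % 2 = 1 by omega]
        simp
      have alt : ∀ k, k ≤ 2 * q + 1 → (mu w).getD (i + (2 * q + 1) + k) false =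
          xor ((mu w).getD (i + (2 * q + 1)) false) (decide (k % 2 = 1)) := by
        intro k
        induction k with
        | zero => simp
        | succ k ih =>
          intro hk'
          have step : (mu w).getD (i + (2 * q + 1) + k + 1) false =
              !((mu w).getD (i + (2 * q + 1) + k) false) := by
            rcases Nat.mod_two_eq_zero_or_one (i + (2 * q + 1) + k) with h | h
            · exact adjE _ h (by omega)
            · have h1 := hk (i + k) (by omega) (by omega)
              have h2 := hk (i + k + 1) (by omega) (by omega)
              have h3 := adjE (i + k) (by omega) (by omega)
              rw [show i + (2 * q + 1) + k + 1 = i + k + 1 + (2 * q + 1) by omega,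
                show i + (2 * q + 1) + k = i + k + (2 * q + 1) by omega, ← h1, ← h2, h3]
          rw [← add_assoc, step, ih (by omega)]
          rcases Nat.mod_two_eq_zero_or_one k with h | h
          · rw [h, show (k + 1) % 2 = 1 by omega]; simp
          · rw [h, show (k + 1) % 2 = 0 by omega]; simp
      have h1 := alt (2 * q + 1) le_rfl
      have h2 := hk (i + (2 * q + 1)) (by omega) (by omega)
      rw [← h2, show (2 * q + 1) % 2 = 1 by omega] at h1
      simp at h1
end

section
/- Let w be a 7/3-power-free finite binary word with |w| ≥ 52. Then w contains both μ³(0) = 01101001 and μ³(1) = 10010110 as subwords. -/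
/-- Does `l` start with `x x x'`, `x` its prefix of length `p`,
`x'` the prefix of `x` of length `r`? -/
def startsPow (l : List Bool) (p r : ℕ) : Bool :=
  List.isPrefixOf (l.take p ++ (l.take p ++ (l.take p).take r)) l

/-- Pairs `(p, ⌈p/3⌉)` used in the search. -/
def periodList : List (ℕ × ℕ) :=
  [(1,1),(2,1),(3,1),(4,2),(5,2),(6,2)]

def isBad (t l : List Bool) : Bool :=
  List.isPrefixOf t l || periodList.any fun q => startsPow l q.1 q.2

/-- Backtracking search, extending words on the left. -/
def searchTree (t : List Bool) : ℕ → List Bool → Bool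
  | 0, l => isBad t l
  | n + 1, l => isBad t l || (searchTree t n (false :: l) && searchTree t n (true :: l))

theorem startsPow_sound (l : List Bool) (p r : ℕ) (hp : 0 < p) (hr : p ≤ 3 * r) (hl : l ≠ [])
    (h : startsPow l p r = true) : ¬ PowerFree (7/3 : ℝ) l := by
  intro hf
  rw [startsPow] at h
  replace h : (l.take p ++ (l.take p ++ (l.take p).take r)) <+: l := by
    exact List.isPrefixOf_iff_prefix.1 h
  have hx : l.take p ≠ [] := by
    simp [hl]; omega
  have hpos : 0 < (l.take p).length := List.length_pos_iff.mpr hx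
  refine hf _ h.isInfix (2 + (((l.take p).take r).length : ℚ) / ((l.take p).length : ℚ)) ?_
    ⟨2, l.take p, (l.take p).take r, hx, ⟨_, List.take_append_drop r _⟩, ?_, by norm_num⟩
  · have h3 : (l.take p).length ≤ 3 * ((l.take p).take r).length := by
      simp only [List.length_take]; omega
    have h3' : ((l.take p).length : ℚ) ≤ 3 * (((l.take p).take r).length : ℚ) := by
      exact_mod_cast h3
    have hpos' : (0 : ℚ) < ((l.take p).length : ℚ) := by exact_mod_cast hpos
    have : (7/3 : ℚ) ≤ 2 + (((l.take p).take r).length : ℚ) / ((l.take p).length : ℚ) := by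
      have : (1/3 : ℚ) ≤ (((l.take p).take r).length : ℚ) / ((l.take p).length : ℚ) := by
        rw [le_div_iff₀ hpos']; linarith
      linarith
    have h4 := (Rat.cast_le (K := ℝ)).mpr this
    norm_num at h4 ⊢
    exact h4
  · simp [List.replicate]

theorem powerFree_of_sub {α : ℝ} {u w : List Bool} (h : PowerFree α w) (hu : u <:+: w) :
    PowerFree α u := fun z hz => h z (hz.trans hu)

theorem isBad_sound (t l : List Bool) (hl : l ≠ []) (h : isBad t l = true)
    (hf : PowerFree (7/3 : ℝ) l) : t <:+: l := by
  rw [isBad, Bool.or_eq_true] at h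
  rcases h with h | h
  · have h2 : t <+: l := by simpa using h
    exact h2.isInfix
  · rw [List.any_eq_true] at h
    obtain ⟨q, hq, h⟩ := h
    have hb : ∀ q ∈ periodList, 0 < q.1 ∧ q.1 ≤ 3 * q.2 := by decide
    exact absurd hf (startsPow_sound l q.1 q.2 (hb q hq).1 (hb q hq).2 hl h)

theorem searchTree_sound (t : List Bool) (n : ℕ) : ∀ (l u : List Bool), n ≤ u.length →
    (l ≠ [] ∨ isBad t l = false) → searchTree t n l = true →
    PowerFree (7/3 : ℝ) (u ++ l) → t <:+: (u ++ l) := by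
  induction n with
  | zero =>
    intro l u _ hl h hf
    rw [searchTree] at h
    have hs : l <:+: u ++ l := (List.suffix_append u l).isInfix
    rcases hl with hl | hl
    · exact (isBad_sound t l hl h (powerFree_of_sub hf hs)).trans hs
    · simp [h] at hl
  | succ n ih =>
    intro l u hu hl h hf
    have hs : l <:+: u ++ l := (List.suffix_append u l).isInfix
    rw [searchTree, Bool.or_eq_true, Bool.and_eq_true] at h
    rcases h with h | h
    · rcases hl with hl | hl
      · exact (isBad_sound t l hl h (powerFree_of_sub hf hs)).trans hs
      · simp [h] at hl
    · rcases List.eq_nil_or_concat u with rfl | ⟨v, b, rfl⟩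
      · simp at hu
      · simp only [List.concat_eq_append, List.append_assoc, List.singleton_append,
          List.length_append, List.length_singleton] at hu hf ⊢
        refine ih (b :: l) v (by omega) (Or.inl (by simp)) ?_ hf
        cases b
        · exact h.1
        · exact h.2

theorem search_zero : (searchTree w01101001 51 [false] &&
    searchTree w01101001 51 [true]) = true := by decide +kernel

theorem search_one : (searchTree w10010110 51 [false] &&
    searchTree w10010110 51 [true]) = true := by decide +kernel

theorem search_main (t w : List Bool) (hw : PowerFree (7/3 : ℝ) w) (hlen : 52 ≤ w.length)
    (h : (searchTree t 51 [false] && searchTree t 51 [true]) = true) : t <:+: w := by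
  rw [Bool.and_eq_true] at h
  rcases List.eq_nil_or_concat w with rfl | ⟨v, b, rfl⟩
  · simp at hlen
  · simp only [List.concat_eq_append, List.length_append, List.length_singleton] at hlen hw ⊢
    refine searchTree_sound t 51 [b] v (by omega) (Or.inl (by simp)) ?_ hw
    cases b
    · exact h.1
    · exact h.2

/-- Every `7/3`-power-free binary word of length at least 52 contains both
`μ³(0) = 01101001` and `μ³(1) = 10010110` as subwords. -/
theorem long_power_free_contains_mu_cubed (w : List Bool)
    (hw : PowerFree (7/3 : ℝ) w) (hlen : 52 ≤ w.length) :
    w01101001 <:+: w ∧ w10010110 <:+: w := by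
  exact ⟨search_main _ w hw hlen search_zero, search_main _ w hw hlen search_one⟩
end

section
/- Let w′ be a subword of a finite binary word w, where w′ is either of the form a b b μ(w″) or of the form μ(w″) b b a for some letters a, b ∈ Σ₂ with a ≠ b and some finite binary word w″ with |w″| ≥ 2. Then w contains a 7/3-power as a subword. -/
theorem containsPower_of_infix (x x' w : List Bool) (n : ℕ) (hx : x ≠ []) (hp : x' <+: x)
    (hb : (7 / 3 : ℚ) ≤ (n : ℚ) + (x'.length : ℚ) / (x.length : ℚ))
    (hw : (List.replicate n x).flatten ++ x' <:+: w) : ContainsPower (7/3 : ℝ) w := by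
  refine ⟨_, hw, _, ?_, n, x, x', hx, hp, rfl, rfl⟩
  have := (Rat.cast_le (K := ℝ)).2 hb
  simpa using this

theorem containsPower_cube (b : Bool) (w : List Bool) (hw : [b, b, b] <:+: w) :
    ContainsPower (7/3 : ℝ) w :=
  containsPower_of_infix [b] [] w 3 (by simp) (by simp) (by norm_num) (by simpa using hw)

theorem containsPower_five (a b : Bool) (w : List Bool) (hw : [b, a, b, a, b] <:+: w) :
    ContainsPower (7/3 : ℝ) w :=
  containsPower_of_infix [b, a] [b] w 2 (by simp) (by simp) (by norm_num) (by simpa using hw)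

theorem containsPower_seven (a b c : Bool) (w : List Bool)
    (hw : [a, b, c, a, b, c, a] <:+: w) : ContainsPower (7/3 : ℝ) w :=
  containsPower_of_infix [a, b, c] [a] w 2 (by simp) (by simp) (by norm_num) (by simpa using hw)

/-- If `w` has a subword of the form `a b b μ(w″)` or `μ(w″) b b a` with `a ≠ b`
and `|w″| ≥ 2`, then `w` contains a `7/3`-power. -/
theorem abb_mu_forces_seven_thirds_power (w w' w'' : List Bool) (a b : Bool)
    (hab : a ≠ b) (hlen : 2 ≤ w''.length)
    (hform : w' = [a, b, b] ++ mu w'' ∨ w' = mu w'' ++ [b, b, a])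
    (hsub : w' <:+: w) :
    ContainsPower (7/3 : ℝ) w := by
  rcases hform with rfl | rfl
  · obtain ⟨c, d, l, rfl⟩ : ∃ c d l, w'' = c :: d :: l := by
      match w'', hlen with
      | c :: d :: l, _ => exact ⟨c, d, l, rfl⟩
    have key : [a, b, b] ++ mu [c, d] <:+: w :=
      List.IsInfix.trans ⟨[], mu l, by simp [mu]⟩ hsub
    cases a <;> cases b <;> cases c <;> cases d <;> simp [mu, muLetter] at hab key <;>
    first
    | exact containsPower_seven _ _ _ _ key
    | exact containsPower_cube true _ (List.IsInfix.trans (by decide) key)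
    | exact containsPower_cube false _ (List.IsInfix.trans (by decide) key)
    | exact containsPower_five false true _ (List.IsInfix.trans (by decide) key)
    | exact containsPower_five true false _ (List.IsInfix.trans (by decide) key)
  · obtain ⟨c, d, l, rfl⟩ : ∃ c d l, w'' = l ++ [c, d] := by
      have h := List.take_append_drop (w''.length - 2) w''
      have h2 : (w''.drop (w''.length - 2)).length = 2 := by simp; omega
      obtain ⟨c, d, hcd⟩ := List.length_eq_two.1 h2
      exact ⟨c, d, _, by rw [← hcd, h]⟩
    have key : mu [c, d] ++ [b, b, a] <:+: w :=
      List.IsInfix.trans ⟨mu l, [], by simp [mu]⟩ hsub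
    cases a <;> cases b <;> cases c <;> cases d <;> simp [mu, muLetter] at hab key <;>
    first
    | exact containsPower_seven _ _ _ _ key
    | exact containsPower_cube true _ (List.IsInfix.trans (by decide) key)
    | exact containsPower_cube false _ (List.IsInfix.trans (by decide) key)
    | exact containsPower_five false true _ (List.IsInfix.trans (by decide) key)
    | exact containsPower_five true false _ (List.IsInfix.trans (by decide) key)
end

section
/- Let i be a natural number and let w be a 7/3-power-free finite binary word with |w| = 5·2^i − 1. Let a be a letter of Σ₂. Then the word w a w contains a 7/3-power x as a subword with |x| ≤ 5·2^i. -/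
/-- `f` has no factor of length at most `L` with exponent at least `7/3`. -/
def NoPow (f : ℕ → Bool) (L : ℕ) : Prop :=
  ∀ p s n : ℕ, 1 ≤ p → 7 * p ≤ 3 * n → n ≤ L → ∃ k, k + p < n ∧ f (s + k) ≠ f (s + k + p)

lemma power_of_prefix (u : List Bool) (hu : u ≠ []) :
    ∀ (m : ℕ) (y : List Bool), y.length ≤ m → y <+: u ++ y →
      ∃ (n : ℕ) (x' : List Bool), x' <+: u ∧ y = (List.replicate n u).flatten ++ x' := by
  have hpos : 0 < u.length := List.length_pos_iff.mpr hu
  intro m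
  induction m with
  | zero =>
    intro y hy _
    have : y = [] := List.length_eq_zero_iff.mp (by omega)
    exact ⟨0, [], List.nil_prefix, by simp [this]⟩
  | succ m ih =>
    intro y hy hp
    by_cases h : y.length ≤ u.length
    · exact ⟨0, y, List.prefix_of_prefix_length_le hp (List.prefix_append u y) h, by simp⟩
    · obtain ⟨y', rfl⟩ : u <+: y :=
        List.prefix_of_prefix_length_le (List.prefix_append u y) hp (by omega)
      rw [List.prefix_append_right_inj] at hp
      obtain ⟨n, x', h1, h2⟩ := ih y' (by simp at hy; omega) hp
      exact ⟨n + 1, x', h1, by simp [List.replicate_succ, ← h2]⟩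

lemma isPower_of_period (f : ℕ → Bool) (p s n : ℕ) (hp : 1 ≤ p) (hn : 7 * p ≤ 3 * n)
    (h : ∀ k, k + p < n → f (s + k) = f (s + k + p)) :
    ∃ β : ℚ, (7/3 : ℝ) ≤ (β : ℝ) ∧ IsPower β ((List.range n).map fun k => f (s + k)) := by
  set y := (List.range n).map fun k => f (s + k) with hy
  set u := (List.range p).map fun k => f (s + k) with hu
  have hul : u.length = p := by simp [hu]
  have hyl : y.length = n := by simp [hy]
  have hune : u ≠ [] := by
    intro h0
    rw [h0] at hul
    simp at hul
    omega
  have hpre : y <+: u ++ y := by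
    rw [List.prefix_iff_eq_take]
    apply List.ext_getElem
    · simp [hyl, hul]
    · intro k h1 h2
      rw [List.getElem_take, List.getElem_append]
      rw [hyl] at h1
      split_ifs with hk
      · simp [hy, hu]
      · rw [hul] at hk
        have := h (k - p) (by omega)
        simp only [hy, hul, List.getElem_map, List.getElem_range]
        rw [this]
        congr 1
        omega
  obtain ⟨m, x', h1, h2⟩ := power_of_prefix u hune y.length y le_rfl hpre
  refine ⟨_, ?_, m, u, x', hune, h1, h2, rfl⟩
  have hlen : n = m * p + x'.length := by
    have := congrArg List.length h2
    simpa [hyl, hul] using this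
  have hp' : (0 : ℚ) < p := by exact_mod_cast hp
  have key : (7/3 : ℚ) ≤ (m : ℚ) + (x'.length : ℚ) / (u.length : ℚ) := by
    rw [hul]
    have e : (m : ℚ) + (x'.length : ℚ) / (p : ℚ) = (n : ℚ) / p := by
      rw [hlen]
      push_cast
      field_simp
    rw [e, le_div_iff₀ hp']
    have : (7 * p : ℚ) ≤ 3 * n := by exact_mod_cast hn
    linarith
  have key' := (Rat.cast_le (K := ℝ)).mpr key
  have e73 : ((7/3 : ℚ) : ℝ) = 7/3 := by norm_num
  rw [e73] at key'
  exact key'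

lemma no_cube {f : ℕ → Bool} {L : ℕ} (h : NoPow f L) (hL : 5 ≤ L) (s : ℕ) :
    ¬ (f s = f (s + 1) ∧ f (s + 1) = f (s + 2)) := by
  rintro ⟨h0, h1⟩
  obtain ⟨k, hk, hne⟩ := h 1 s 3 (by omega) (by omega) (by omega)
  have : k < 2 := by omega
  interval_cases k
  · exact hne h0
  · exact hne h1

lemma no_alt {f : ℕ → Bool} {L : ℕ} (h : NoPow f L) (hL : 5 ≤ L) (s : ℕ) :
    ¬ (f s = f (s + 2) ∧ f (s + 1) = f (s + 3) ∧ f (s + 2) = f (s + 4)) := by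
  rintro ⟨h0, h1, h2⟩
  obtain ⟨k, hk, hne⟩ := h 2 s 5 (by omega) (by omega) (by omega)
  have : k < 3 := by omega
  interval_cases k
  · exact hne h0
  · exact hne h1
  · exact hne h2

lemma no_three {f : ℕ → Bool} {L : ℕ} (h : NoPow f L) (hL : 7 ≤ L) (s : ℕ) :
    ¬ (f s = f (s + 3) ∧ f (s + 1) = f (s + 4) ∧ f (s + 2) = f (s + 5) ∧
      f (s + 3) = f (s + 6)) := by
  rintro ⟨h0, h1, h2, h3⟩
  obtain ⟨k, hk, hne⟩ := h 3 s 7 (by omega) (by omega) (by omega)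
  have : k < 4 := by omega
  interval_cases k
  · exact hne h0
  · exact hne h1
  · exact hne h2
  · exact hne h3

/-- Local step: `j` is one more than a position. -/
lemma step {f : ℕ → Bool} {L : ℕ} (h : NoPow f L) (hL : 7 ≤ L) (s : ℕ)
    (h1 : f (s + 2) ≠ f (s + 3)) (h2 : f (s + 1) = f (s + 2) ∨ f (s + 3) = f (s + 4)) :
    f (s + 4) ≠ f (s + 5) ∧ (f (s + 3) = f (s + 4) ∨ f (s + 5) = f (s + 6)) := by
  have c0 := no_cube h (by omega) s
  have c3 := no_cube h (by omega) (s + 3)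
  have c4 := no_cube h (by omega) (s + 4)
  have a2 := no_alt h (by omega) (s + 2)
  have t0 := no_three h hL s
  simp only [add_assoc, Nat.reduceAdd] at c0 c3 c4 a2 t0
  generalize f s = x0 at *
  generalize f (s + 1) = x1 at *
  generalize f (s + 2) = x2 at *
  generalize f (s + 3) = x3 at *
  generalize f (s + 4) = x4 at *
  generalize f (s + 5) = x5 at *
  generalize f (s + 6) = x6 at *
  clear h
  revert x0 x1 x2 x3 x4 x5 x6
  decide

lemma sync {f : ℕ → Bool} {L : ℕ} (h : NoPow f L) (hL : 7 ≤ L) :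
    ∃ r, ∀ m, f (r + 2 * m) ≠ f (r + 2 * m + 1) := by
  obtain ⟨s, hs⟩ : ∃ s, f (s + 1) = f (s + 2) := by
    by_contra! hc
    have a := no_alt h (by omega) 1
    have h0 := hc 0
    have h1 := hc 1
    have h2 := hc 2
    have h3 := hc 3
    simp only [Nat.reduceAdd] at a h0 h1 h2 h3
    generalize f 1 = x1 at *
    generalize f 2 = x2 at *
    generalize f 3 = x3 at *
    generalize f 4 = x4 at *
    generalize f 5 = x5 at *
    clear h hc
    cases x1 <;> cases x2 <;> cases x3 <;> cases x4 <;> cases x5 <;> simp at *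
  have key : ∀ m, f (s + 2 * m + 2) ≠ f (s + 2 * m + 3) ∧
      (f (s + 2 * m + 1) = f (s + 2 * m + 2) ∨ f (s + 2 * m + 3) = f (s + 2 * m + 4)) := by
    intro m
    induction m with
    | zero =>
      have c := no_cube h (by omega) (s + 1)
      exact ⟨fun e => c ⟨hs, e⟩, Or.inl hs⟩
    | succ m ih => exact step h hL (s + 2 * m) ih.1 ih.2
  refine ⟨s + 2, fun m => ?_⟩
  have := (key m).1
  rw [show s + 2 + 2 * m = s + 2 * m + 2 by ring]
  exact this

lemma no_circular (i : ℕ) : ∀ f : ℕ → Bool, (∀ k, f (k + 5 * 2 ^ i) = f k) →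
    ¬ NoPow f (5 * 2 ^ i) := by
  induction i with
  | zero =>
    intro f hper h
    simp only [pow_zero, mul_one] at hper h
    have c0 := no_cube h le_rfl 0
    have c1 := no_cube h le_rfl 1
    have c2 := no_cube h le_rfl 2
    have c3 := no_cube h le_rfl 3
    have c4 := no_cube h le_rfl 4
    have a0 := no_alt h le_rfl 0
    have a1 := no_alt h le_rfl 1
    have a2 := no_alt h le_rfl 2
    have a3 := no_alt h le_rfl 3
    have a4 := no_alt h le_rfl 4
    have p0 := hper 0
    have p1 := hper 1
    have p2 := hper 2
    have p3 := hper 3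
    simp only [Nat.reduceAdd] at c0 c1 c2 c3 c4 a0 a1 a2 a3 a4 p0 p1 p2 p3
    simp only [p0, p1, p2, p3] at c0 c1 c2 c3 c4 a0 a1 a2 a3 a4
    clear p0 p1 p2 p3 h hper
    generalize f 0 = x0 at *
    generalize f 1 = x1 at *
    generalize f 2 = x2 at *
    generalize f 3 = x3 at *
    generalize f 4 = x4 at *
    revert x0 x1 x2 x3 x4
    decide
  | succ i ih =>
    intro f hper h
    have hpow : 1 ≤ 2 ^ i := Nat.one_le_two_pow
    have e : 5 * 2 ^ (i + 1) = 2 * (5 * 2 ^ i) := by ring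
    rw [e] at h hper
    obtain ⟨r, hr⟩ := sync h (by omega)
    apply ih (fun k => f (r + 2 * k))
    · intro k
      have := hper (r + 2 * k)
      rw [← this]
      congr 1
      ring
    · intro p s n hp hn hle
      by_contra! hc
      obtain ⟨k, hk, hne⟩ := h (2 * p) (r + 2 * s) (2 * n) (by omega) (by omega) (by omega)
      have hq := hc (k / 2) (by omega)
      rcases Nat.even_or_odd' k with ⟨q, rfl | rfl⟩
      · rw [show 2 * q / 2 = q by omega] at hq
        apply hne
        convert hq using 2 <;> ring
      · rw [show (2 * q + 1) / 2 = q by omega] at hq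
        have h1 := hr (s + q)
        have h2 := hr (s + q + p)
        apply hne
        rw [show r + 2 * s + (2 * q + 1) = r + 2 * (s + q) + 1 by ring,
          show r + 2 * (s + q) + 1 + 2 * p = r + 2 * (s + q + p) + 1 by ring]
        revert hq h1 h2
        cases f (r + 2 * (s + q)) <;> cases f (r + 2 * (s + q) + 1) <;>
          cases f (r + 2 * (s + q + p)) <;> cases f (r + 2 * (s + q + p) + 1) <;> simp

/-- If `w` is `7/3`-power-free with `|w| = 5·2^i − 1` and `a` is a letter, then
`w a w` contains a `7/3`-power `x` with `|x| ≤ 5·2^i`. -/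
theorem waw_contains_power_five (i : ℕ) (w : List Bool)
    (hw : PowerFree (7/3 : ℝ) w) (hlen : w.length = 5 * 2 ^ i - 1) (a : Bool) :
    ∃ x : List Bool, x <:+: (w ++ [a] ++ w) ∧ x.length ≤ 5 * 2 ^ i ∧
      ∃ β : ℚ, (7/3 : ℝ) ≤ (β : ℝ) ∧ IsPower β x := by
  by_contra hcon
  have hpow : 1 ≤ 2 ^ i := Nat.one_le_two_pow
  set L := 5 * 2 ^ i with hL
  have hvl : (w ++ [a]).length = L := by simp; omega
  apply no_circular i (fun k => (w ++ [a]).getD (k % L) false)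
  · intro k
    simp [← hL]
  · rw [← hL]
    intro p s n hp hn hle
    by_contra! hc
    have hper : ∀ k, (fun k => (w ++ [a]).getD (k % L) false) (s + k) =
        (w ++ [a]).getD ((s % L + k) % L) false := by
      intro k
      simp
    obtain ⟨β, h1, h2⟩ := isPower_of_period
      (fun k => (w ++ [a]).getD (k % L) false) p s n hp hn hc
    refine hcon ⟨_, ?_, ?_, β, h1, h2⟩
    · have hs : s % L < L := Nat.mod_lt _ (by omega)
      have : (List.range n).map (fun k => (fun k => (w ++ [a]).getD (k % L) false) (s + k)) =
          ((w ++ [a] ++ w).drop (s % L)).take n := by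
        apply List.ext_getElem
        · simp
          omega
        · intro k h3 h4
          have hkn : k < n := by simpa using h3
          rw [List.getElem_map, List.getElem_range, hper, List.getElem_take, List.getElem_drop]
          rw [List.getElem_append]
          split_ifs with hlt
          · rw [hvl] at hlt
            rw [Nat.mod_eq_of_lt hlt, List.getD_eq_getElem]
          · rw [hvl] at hlt
            have e : (s % L + k) % L = s % L + k - L := by
              rw [Nat.mod_eq_sub_mod (by omega), Nat.mod_eq_of_lt (by omega)]
            simp only [hvl, e]
            rw [List.getD_eq_getElem _ _ (by rw [hvl]; omega), List.getElem_append_left]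
      rw [this]
      exact (List.take_prefix _ _).isInfix.trans (List.drop_suffix _ _).isInfix
    · simpa using hle
end

section
/- For every integer k ≥ 0, each of the morphisms μ^k and E ∘ μ^k maps every infinite 7/3-power-free binary word to an infinite 7/3-power-free binary word. -/
/-- The factor of `u` of length `m` starting at position `i`. -/
def factorAt (u : ℕ → Bool) (i m : ℕ) : List Bool := (List.range m).map fun k => u (i + k)

theorem factorAt_length (u : ℕ → Bool) (i m : ℕ) : (factorAt u i m).length = m := by
  simp [factorAt]

theorem factorAt_add (u : ℕ → Bool) (i p m : ℕ) :
    factorAt u i (p + m) = factorAt u i p ++ factorAt u (i + p) m := by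
  simp [factorAt, List.range_add, Function.comp_def, Nat.add_assoc]

theorem factorAt_shift (u : ℕ → Bool) (i p K m : ℕ)
    (h : ∀ j < K, u (i + j) = u (i + j + p)) (hm : m ≤ K) :
    factorAt u (i + p) m = factorAt u i m := by
  unfold factorAt
  apply List.map_congr_left
  intro a ha
  rw [List.mem_range] at ha
  rw [h a (by omega)]
  congr 1
  omega

theorem factorAt_power (u : ℕ → Bool) (i p K r : ℕ)
    (h : ∀ j < K, u (i + j) = u (i + j + p)) (n : ℕ) (hn : n * p + r ≤ K + p) :
    factorAt u i (n * p + r) = (List.replicate n (factorAt u i p)).flatten ++ factorAt u i r := by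
  induction n with
  | zero => simp
  | succ n ih =>
    have e : (n + 1) * p + r = p + (n * p + r) := by ring
    rw [e] at hn ⊢
    rw [factorAt_add, factorAt_shift u i p K _ h (by omega), ih (by omega)]
    simp [List.replicate_succ]

/-- Combinatorial form of being `7/3`-power-free. -/
def NoRep (u : ℕ → Bool) : Prop :=
  ∀ i p K : ℕ, 0 < p → 4 * p ≤ 3 * K → ¬ ∀ j < K, u (i + j) = u (i + j + p)

theorem noRep_of_powerFree (u : ℕ → Bool) (hu : PowerFreeInf (7/3 : ℝ) u) : NoRep u := by
  intro i p K hp hK h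
  have hdiv : (K + p) / p * p + (K + p) % p = K + p := by
    rw [Nat.mul_comm]; exact Nat.div_add_mod _ _
  have hr : (K + p) % p < p := Nat.mod_lt _ hp
  have hpq : (0 : ℚ) < p := by exact_mod_cast hp
  refine hu (factorAt u i (K + p)) ⟨i, ?_⟩ (((K + p : ℕ) : ℚ) / p) ?_
    ⟨(K + p) / p, factorAt u i p, factorAt u i ((K + p) % p), ?_, ?_, ?_, ?_⟩
  · rw [factorAt_length]; rfl
  · have : (7 / 3 : ℚ) ≤ ((K + p : ℕ) : ℚ) / p := by
      rw [le_div_iff₀ hpq]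
      have : (4 : ℚ) * p ≤ 3 * K := by exact_mod_cast hK
      push_cast
      linarith
    have h2 : ((7 / 3 : ℚ) : ℝ) ≤ ((((K + p : ℕ) : ℚ) / p : ℚ) : ℝ) := by exact_mod_cast this
    have h3 : ((7 / 3 : ℚ) : ℝ) = 7 / 3 := by norm_num
    rw [h3] at h2
    exact h2
  · intro h0
    have := congrArg List.length h0
    rw [factorAt_length] at this
    simp at this
    omega
  · have : p = (K + p) % p + (p - (K + p) % p) := by omega
    generalize (K + p) % p = r at *
    rw [this, factorAt_add]
    exact List.prefix_append _ _
  · conv_lhs => rw [← hdiv]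
    exact factorAt_power u i p K _ h _ (le_of_eq hdiv)
  · rw [factorAt_length, factorAt_length]
    field_simp
    have : (((K + p) / p * p + (K + p) % p : ℕ) : ℚ) = ((K + p : ℕ) : ℚ) := by rw [hdiv]
    push_cast at this ⊢
    linarith

theorem powerFree_of_noRep (u : ℕ → Bool) (hu : NoRep u) : PowerFreeInf (7/3 : ℝ) u := by
  rintro z ⟨i, hz⟩ β hβ ⟨n, x, x', hx, hx', hzx, hn⟩
  have hp : 0 < x.length := List.length_pos_of_ne_nil hx
  have hpq : (0 : ℚ) < x.length := by exact_mod_cast hp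
  have hβ' : (7 / 3 : ℚ) ≤ β := by
    have h3 : ((7 / 3 : ℚ) : ℝ) = 7 / 3 := by norm_num
    rw [← h3] at hβ
    exact_mod_cast hβ
  have hlen' : x'.length ≤ x.length := hx'.length_le
  have hlen : z.length = n * x.length + x'.length := by
    rw [hzx]; simp
  have h7 : 7 * x.length ≤ 3 * z.length := by
    have h1 : (7 / 3 : ℚ) * x.length ≤ n * x.length + x'.length := by
      rw [← hn] at hβ'
      have := mul_le_mul_of_nonneg_right hβ' hpq.le
      rw [add_mul, div_mul_cancel₀ _ hpq.ne'] at this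
      exact this
    have h2 : (7 : ℚ) * x.length ≤ 3 * z.length := by
      rw [hlen]; push_cast; linarith
    exact_mod_cast h2
  obtain ⟨m, rfl⟩ : ∃ m, n = m + 1 := by
    rcases n with _ | m
    · simp at hlen; omega
    · exact ⟨m, rfl⟩
  have e1 : z = x ++ ((List.replicate m x).flatten ++ x') := by
    rw [hzx]; simp [List.replicate_succ]
  have e2 : ((List.replicate m x).flatten ++ x') <+: z := by
    rw [hzx, List.replicate_succ', List.flatten_append, List.append_assoc]
    apply (List.prefix_append_right_inj _).2
    simp only [List.flatten_cons, List.flatten_nil, List.append_nil]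
    exact hx'.trans (List.prefix_append _ _)
  obtain ⟨t, ht⟩ := e2
  have hval : ∀ j, j < z.length → z[j]? = some (u (i + j)) := by
    intro j hj
    rw [hz]
    simp [hj]
  set y := (List.replicate m x).flatten ++ x' with hy
  have hzy : z.length = x.length + y.length := by rw [e1]; simp
  refine hu i x.length y.length hp (by omega) ?_
  intro j hj
  have a1 := hval j (by omega)
  have a2 := hval (x.length + j) (by omega)
  rw [← ht, List.getElem?_append_left hj] at a1
  rw [e1, List.getElem?_append_right (by omega), Nat.add_sub_cancel_left, a1] at a2
  rw [Option.some.inj a2]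
  congr 1
  omega

/-- The image of an infinite word under `μ`. -/
def muInf (v : ℕ → Bool) (n : ℕ) : Bool := if n % 2 = 0 then v (n / 2) else !v (n / 2)

theorem muInf_even (v : ℕ → Bool) (n : ℕ) : muInf v (2 * n) = v n := by
  simp [muInf]

theorem muInf_odd (v : ℕ → Bool) (n : ℕ) : muInf v (2 * n + 1) = !v n := by
  have : (2 * n + 1) / 2 = n := by omega
  simp [muInf, this, Nat.add_mod]

theorem noRep_muInf (v : ℕ → Bool) (hv : NoRep v) : NoRep (muInf v) := by
  intro i p K hp hK h
  rcases Nat.even_or_odd' p with ⟨q, rfl | rfl⟩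
  · refine hv (i / 2) q ((K + 1) / 2) (by omega) (by omega) ?_
    intro t ht
    rcases Nat.even_or_odd' i with ⟨c, rfl | rfl⟩
    · have h1 := h (2 * t) (by omega)
      rw [show 2 * c + 2 * t + 2 * q = 2 * (c + t + q) by ring,
        show 2 * c + 2 * t = 2 * (c + t) by ring, muInf_even, muInf_even] at h1
      rw [show 2 * c / 2 = c by omega]
      exact h1
    · rw [show (2 * c + 1) / 2 = c by omega]
      rcases t with _ | t
      · have h1 := h 0 (by omega)
        rw [show 2 * c + 1 + 0 + 2 * q = 2 * (c + q) + 1 by ring, Nat.add_zero,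
          muInf_odd, muInf_odd] at h1
        simpa using h1
      · have h1 := h (2 * t + 1) (by omega)
        rw [show 2 * c + 1 + (2 * t + 1) + 2 * q = 2 * (c + (t + 1) + q) by ring,
          show 2 * c + 1 + (2 * t + 1) = 2 * (c + (t + 1)) by ring, muInf_even, muInf_even] at h1
        exact h1
  · -- odd period: the word alternates on the first `K` letters
    have alt : ∀ j, j + 1 < K → muInf v (i + (j + 1)) = !muInf v (i + j) := by
      intro j hj
      rcases Nat.even_or_odd' (i + j) with ⟨c, hc | hc⟩
      · rw [← Nat.add_assoc, hc, muInf_odd, muInf_even]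
      · rw [h j (by omega), h (j + 1) hj,
          show i + (j + 1) + (2 * q + 1) = 2 * (c + q + 1) + 1 by omega,
          show i + j + (2 * q + 1) = 2 * (c + q + 1) by omega, muInf_odd, muInf_even]
    have alt2 : ∀ t, 2 * t < K → muInf v (i + 2 * t) = muInf v i := by
      intro t
      induction t with
      | zero => intro _; rfl
      | succ t ih =>
        intro ht
        rw [show 2 * (t + 1) = 2 * t + 1 + 1 by ring, alt _ (by omega), alt _ (by omega),
          ih (by omega), Bool.not_not]
    have h0 := h 0 (by omega)
    rw [Nat.add_zero, alt (2 * q) (by omega), alt2 q (by omega)] at h0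
    simp at h0

theorem noRep_not (v : ℕ → Bool) (hv : NoRep v) : NoRep (fun n => !v n) := by
  intro i p K hp hK h
  exact hv i p K hp hK fun j hj => by simpa using h j hj

theorem noRep_iter (k : ℕ) (v : ℕ → Bool) (hv : NoRep v) : NoRep (muInf^[k] v) := by
  induction k with
  | zero => exact hv
  | succ k ih => rw [Function.iterate_succ_apply']; exact noRep_muInf _ ih

theorem wordPrefix_muInf (v : ℕ → Bool) (n : ℕ) :
    wordPrefix (muInf v) (2 * n) = mu (wordPrefix v n) := by
  induction n with
  | zero => rfl
  | succ n ih =>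
    have e : wordPrefix (muInf v) (2 * (n + 1)) =
        wordPrefix (muInf v) (2 * n) ++ [muInf v (2 * n), muInf v (2 * n + 1)] := by
      simp [wordPrefix, Nat.mul_add, List.range_succ]
    rw [e, ih, muInf_even, muInf_odd]
    have e2 : wordPrefix v (n + 1) = wordPrefix v n ++ [v n] := by
      simp [wordPrefix, List.range_succ]
    rw [e2]
    cases hb : v n <;> simp [mu, muLetter]

theorem wordPrefix_iter (k : ℕ) (v : ℕ → Bool) (n : ℕ) :
    wordPrefix (muInf^[k] v) (2 ^ k * n) = mu^[k] (wordPrefix v n) := by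
  induction k with
  | zero => simp
  | succ k ih =>
    rw [Function.iterate_succ_apply', Function.iterate_succ_apply', ← ih, ← wordPrefix_muInf]
    congr 1
    ring

theorem eq_of_image (h : List Bool → List Bool) (w u v : ℕ → Bool)
    (hu : IsMorphImage h w u)
    (hv : ∀ n, ∃ l, wordPrefix v l = h (wordPrefix w n)) : u = v := by
  funext m
  obtain ⟨n, hn⟩ := hu.2 (m + 1)
  obtain ⟨l, hl⟩ := hv n
  have h1 := hu.1 n
  have hll : l = (h (wordPrefix w n)).length := by
    rw [← hl]; simp [wordPrefix]
  rw [← hll] at h1 hn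
  rw [← hl] at h1
  have := congrArg (fun s => s[m]?) h1
  have hm : m < l := hn
  simpa [wordPrefix, hm] using this

/-- For every `k ≥ 0`, each of `μ^k` and `E ∘ μ^k` maps every infinite
`7/3`-power-free word to an infinite `7/3`-power-free word. -/
theorem mu_iterates_preserve_power_freeness (k : ℕ) (w u : ℕ → Bool)
    (hw : PowerFreeInf (7/3 : ℝ) w) :
    (IsMorphImage (mu^[k]) w u → PowerFreeInf (7/3 : ℝ) u) ∧
    (IsMorphImage (eMorph ∘ mu^[k]) w u → PowerFreeInf (7/3 : ℝ) u) := by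
  have hN := noRep_iter k w (noRep_of_powerFree w hw)
  constructor
  · intro h
    rw [eq_of_image _ w u (muInf^[k] w) h fun n => ⟨_, wordPrefix_iter k w n⟩]
    exact powerFree_of_noRep _ hN
  · intro h
    rw [eq_of_image _ w u (fun n => !(muInf^[k] w) n) h fun n => ⟨2 ^ k * n, by
      rw [Function.comp_apply, ← wordPrefix_iter k w n]
      simp [wordPrefix, eMorph]⟩]
    exact powerFree_of_noRep _ (noRep_not _ hN)
end
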